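/- Let h ≥ 1 and let s_1, …, s_h be real numbers with s_i > 3 for all i. For weakly decreasing (m_1, …, m_h) ∈ (ℕ+)^h, let n^p_{[m_1,…,m_h]} denote the number of pyramids of height h with multivolume (m_1, …, m_h). Then Σ_{m_1 ≥ … ≥ m_h ≥ 1} n^p_{[m_1,…,m_h]} / (m_1^{s_1} ⋯ m_h^{s_h}) = Z^▲(s_1, …, s_h)^2, where Z^▲(s_1, …, s_h) = Σ_{n_1 ≥ … ≥ n_h ≥ 1} (n_1 − n_2 + 1) ⋯ (n_{h−1} − n_h + 1)/(n_1^{s_1} ⋯ n_h^{s_h}), all series converging. -/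

import Mathlib

/-!
A nonempty plateau is a product of two intervals in a unique way, and inclusions of nonempty
products are inclusions of the factors. So a pyramid of height `h` is the same thing as a pair of
chains of `h` nested intervals, each chain starting with an interval whose left endpoint is `0`
(`chainPyramid`, `card_pyramid_eq`), and its multivolume is the entrywise product of the two tuples
of lengths. A chain with lengths `n` is determined by the offsets of consecutive left endpoints,
which range freely over `0, …, n i - n (i+1)`; hence there are `pyrWeight h n` of them
(`card_len_fiber`).

Writing `w n = ∏ (n i) ^ (-s i)`, which is multiplicative in `n`, summation along fibres
(`tsum_card_fiber`) identifies `Z` with the sum of `w (len b)` over all chains `b`, and the series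
over multivolumes with the sum of `w (len b * len b') = w (len b) * w (len b')` over pairs of
chains, which is `Z ^ 2`. The manipulations are done in `[0, ∞]`; the only convergence needed is
that of `Z` (`summable_weight`), and it also forces the numbers of pyramids to be finite
(`finite_fiber`).
-/


/-- The `a`-th horizontal slice of a finite set of cells in `ℕ × ℤ × ℤ`. -/
def polySlice (P : Finset (ℕ × ℤ × ℤ)) (a : ℕ) : Finset (ℤ × ℤ) :=
  (P.filter fun q => q.1 = a).image fun q => q.2

/-- A plateau: the product of two nonempty finite integer intervals. -/
def IsPlateau (S : Finset (ℤ × ℤ)) : Prop :=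
  ∃ a b c d : ℤ, a ≤ b ∧ c ≤ d ∧ S = Finset.Icc a b ×ˢ Finset.Icc c d

/-- A pyramid of height `h`. -/
def IsPyramid (h : ℕ) (P : Finset (ℕ × ℤ × ℤ)) : Prop :=
  (∀ a : ℕ, (polySlice P a).Nonempty ↔ a < h) ∧
  (∀ a : ℕ, a < h → IsPlateau (polySlice P a)) ∧
  (∀ (a : ℕ) (b c : ℤ), (a + 1, b, c) ∈ P → (a, b, c) ∈ P) ∧
  (∀ b c : ℤ, ((0 : ℕ), b, c) ∈ P → 0 ≤ b ∧ 0 ≤ c) ∧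
  ((0 : ℕ), (0 : ℤ), (0 : ℤ)) ∈ P

/-- An espalier of height `h`: a pyramid all of whose plateaus contain `(0,0)`. -/
def IsEspalier (h : ℕ) (P : Finset (ℕ × ℤ × ℤ)) : Prop :=
  IsPyramid h P ∧ ∀ a : ℕ, a < h → (a, (0 : ℤ), (0 : ℤ)) ∈ P

/-- The weight `(n_1 - n_2 + 1) ⋯ (n_{h-1} - n_h + 1)` of a tuple of positive integers
(an empty product, equal to `1`, when `h = 1`). -/
def pyrWeight (h : ℕ) (n : Fin h → ℕ+) : ℕ :=
  ∏ i : Fin h,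
    if hi : (i : ℕ) + 1 < h then (n i : ℕ) - (n ⟨(i : ℕ) + 1, hi⟩ : ℕ) + 1 else 1

open scoped ENNReal

/-! ### Chains of nested intervals -/

/-- Chains of `h` nested nonempty integer intervals, the first one starting at `0`. The pair
`(n, l)` encodes the intervals `[l i, l i + n i)`, so `n` lists the lengths and `l` the left
endpoints, which are natural numbers because all intervals lie in the first one. -/
abbrev IntervalChain (h : ℕ) : Type :=
  {p : (Fin h → ℕ+) × (Fin h → ℕ) //
    (∀ i : Fin h, (i : ℕ) = 0 → p.2 i = 0) ∧
    ∀ (i : Fin h) (hi : (i : ℕ) + 1 < h),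
      p.2 i ≤ p.2 ⟨i + 1, hi⟩ ∧
        p.2 ⟨i + 1, hi⟩ + (p.1 ⟨i + 1, hi⟩ : ℕ) ≤ p.2 i + (p.1 i : ℕ)}

/-- Weakly decreasing `h`-tuples of positive integers. -/
abbrev DecTuple (h : ℕ) : Type := {n : Fin h → ℕ+ // Antitone n}

theorem antitone_of_step {h : ℕ} {α : Type*} [Preorder α] (n : Fin h → α)
    (hn : ∀ (i : Fin h) (hi : (i : ℕ) + 1 < h), n ⟨i + 1, hi⟩ ≤ n i) : Antitone n := by
  have key : ∀ (k i : ℕ) (hk : i + k < h), n ⟨i + k, hk⟩ ≤ n ⟨i, by omega⟩ := by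
    intro k
    induction k with
    | zero => intro i hk; exact le_rfl
    | succ k ih => intro i hk; exact (hn ⟨i + k, by omega⟩ hk).trans (ih i (by omega))
  intro i j hij
  obtain ⟨k, hk⟩ := Nat.exists_eq_add_of_le (Fin.le_def.mp hij)
  have hj : j = ⟨i + k, by omega⟩ := Fin.ext hk
  rw [hj]
  exact key k i _

/-- The tuple of lengths of a chain of intervals. -/
def IntervalChain.len {h : ℕ} (b : IntervalChain h) : DecTuple h :=
  ⟨b.1.1, antitone_of_step _ fun i hi => by
    have := b.2.2 i hi
    rw [← PNat.coe_le_coe]; omega⟩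

/-- The offsets `l (i+1) - l i` of consecutive left endpoints determine a chain of given lengths,
and they range freely over `0, …, n i - n (i+1)`. -/
theorem card_len_fiber {h : ℕ} (n : DecTuple h) :
    Nat.card {b : IntervalChain h // b.len = n} = pyrWeight h n.1 ∧
      Finite {b : IntervalChain h // b.len = n} := by
  let c : Fin h → ℕ := fun i =>
    if hi : (i : ℕ) + 1 < h then (n.1 i : ℕ) - (n.1 ⟨(i : ℕ) + 1, hi⟩ : ℕ) + 1 else 1
  let Φ : {b : IntervalChain h // b.len = n} → (∀ i, Fin (c i)) := fun b i =>
    ⟨if hi : (i : ℕ) + 1 < h then b.1.1.2 ⟨i + 1, hi⟩ - b.1.1.2 i else 0, by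
      obtain ⟨b, rfl⟩ := b
      by_cases hi : (i : ℕ) + 1 < h
      · have := b.2.2 i hi
        simp only [c, hi, dif_pos, IntervalChain.len]
        omega
      · simp [c, hi]⟩
  have hΦ : Function.Bijective Φ := by
    constructor
    · rintro ⟨b, hb⟩ ⟨b', hb'⟩ hbb
      apply Subtype.ext
      apply Subtype.ext
      apply Prod.ext
      · exact congrArg Subtype.val (hb.trans hb'.symm)
      · have key : ∀ (k : ℕ) (hk : k < h), b.1.2 ⟨k, hk⟩ = b'.1.2 ⟨k, hk⟩ := by
          intro k
          induction k with
          | zero => intro hk; rw [b.2.1 _ rfl, b'.2.1 _ rfl]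
          | succ k ih =>
            intro hk
            have h1 := congrArg Fin.val (congrFun hbb ⟨k, by omega⟩)
            simp only [Φ, hk, dif_pos] at h1
            have h2 := (b.2.2 ⟨k, by omega⟩ hk).1
            have h3 := (b'.2.2 ⟨k, by omega⟩ hk).1
            have h4 := ih (by omega)
            simp only at h2 h3
            omega
        funext i
        exact key i i.2
    · intro d
      let l : Fin h → ℕ := fun i =>
        ∑ j ∈ Finset.range i, if hj : j < h then (d ⟨j, hj⟩ : ℕ) else 0
      have hl : ∀ (i : Fin h) (hi : (i : ℕ) + 1 < h), l ⟨i + 1, hi⟩ = l i + d i := by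
        intro i hi
        simp [l, Finset.sum_range_succ]
      have hd : ∀ (i : Fin h) (hi : (i : ℕ) + 1 < h),
          (d i : ℕ) + (n.1 ⟨i + 1, hi⟩ : ℕ) ≤ n.1 i := by
        intro i hi
        have h1 := (d i).2
        simp only [c, hi, dif_pos] at h1
        have h2 : (n.1 ⟨i + 1, hi⟩ : ℕ) ≤ n.1 i :=
          n.2 (Fin.le_def.mpr (Nat.le_succ _))
        omega
      refine ⟨⟨⟨(n.1, l), ?_, ?_⟩, rfl⟩, ?_⟩
      · intro i hi; simp [l, hi]
      · intro i hi
        have h1 := hl i hi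
        have h2 := hd i hi
        simp only
        omega
      · funext i
        apply Fin.ext
        by_cases hi : (i : ℕ) + 1 < h
        · have h1 := hl i hi
          simp only [Φ, hi, dif_pos]
          omega
        · have h1 := (d i).2
          simp only [c, hi, dif_neg, not_false_eq_true] at h1
          simp only [Φ, hi, dif_neg, not_false_eq_true]
          omega
  refine ⟨?_, Finite.of_injective Φ hΦ.1⟩
  rw [Nat.card_congr (Equiv.ofBijective Φ hΦ), Nat.card_pi]
  simp [c, pyrWeight]

/-! ### Pyramids as pairs of chains -/

theorem mem_polySlice {P : Finset (ℕ × ℤ × ℤ)} {a : ℕ} {x y : ℤ} :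
    (x, y) ∈ polySlice P a ↔ (a, x, y) ∈ P := by
  simp [polySlice]

/-- The pyramid whose `i`-th slice is the product of the `i`-th intervals of two chains. -/
noncomputable def chainPyramid {h : ℕ} (b b' : IntervalChain h) : Finset (ℕ × ℤ × ℤ) :=
  Finset.univ.biUnion fun i : Fin h =>
    {(i : ℕ)} ×ˢ (Finset.Ico (b.1.2 i : ℤ) (b.1.2 i + (b.1.1 i : ℕ)) ×ˢ
      Finset.Ico (b'.1.2 i : ℤ) (b'.1.2 i + (b'.1.1 i : ℕ)))

theorem mem_chainPyramid {h : ℕ} {b b' : IntervalChain h} {a : ℕ} {x y : ℤ} :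
    (a, x, y) ∈ chainPyramid b b' ↔ ∃ ha : a < h,
      ((b.1.2 ⟨a, ha⟩ : ℤ) ≤ x ∧ x < b.1.2 ⟨a, ha⟩ + (b.1.1 ⟨a, ha⟩ : ℕ)) ∧
      ((b'.1.2 ⟨a, ha⟩ : ℤ) ≤ y ∧ y < b'.1.2 ⟨a, ha⟩ + (b'.1.1 ⟨a, ha⟩ : ℕ)) := by
  simp only [chainPyramid, Finset.mem_biUnion, Finset.mem_univ, true_and, Finset.mem_product,
    Finset.mem_singleton, Finset.mem_Ico]
  constructor
  · rintro ⟨i, rfl, h1⟩; exact ⟨i.2, h1⟩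
  · rintro ⟨ha, h1⟩; exact ⟨⟨a, ha⟩, rfl, h1⟩

theorem polySlice_chainPyramid {h : ℕ} (b b' : IntervalChain h) (i : Fin h) :
    polySlice (chainPyramid b b') i =
      Finset.Ico (b.1.2 i : ℤ) (b.1.2 i + (b.1.1 i : ℕ)) ×ˢ
        Finset.Ico (b'.1.2 i : ℤ) (b'.1.2 i + (b'.1.1 i : ℕ)) := by
  ext ⟨x, y⟩
  rw [mem_polySlice, mem_chainPyramid]
  simp

theorem card_polySlice_chainPyramid {h : ℕ} (b b' : IntervalChain h) (i : Fin h) :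
    (polySlice (chainPyramid b b') i).card = b.1.1 i * b'.1.1 i := by
  rw [polySlice_chainPyramid]
  simp

theorem isPyramid_chainPyramid {h : ℕ} (hh : 1 ≤ h) (b b' : IntervalChain h) :
    IsPyramid h (chainPyramid b b') := by
  refine ⟨?_, ?_, ?_, ?_, ?_⟩
  · intro a
    constructor
    · rintro ⟨⟨x, y⟩, hxy⟩
      rw [mem_polySlice, mem_chainPyramid] at hxy
      exact hxy.1
    · intro ha
      refine ⟨(b.1.2 ⟨a, ha⟩, b'.1.2 ⟨a, ha⟩), ?_⟩
      rw [mem_polySlice, mem_chainPyramid]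
      have := (b.1.1 ⟨a, ha⟩).pos
      have := (b'.1.1 ⟨a, ha⟩).pos
      exact ⟨ha, by omega, by omega⟩
  · intro a ha
    have h1 := (b.1.1 ⟨a, ha⟩).pos
    have h2 := (b'.1.1 ⟨a, ha⟩).pos
    refine ⟨b.1.2 ⟨a, ha⟩, b.1.2 ⟨a, ha⟩ + (b.1.1 ⟨a, ha⟩ : ℕ) - 1,
      b'.1.2 ⟨a, ha⟩, b'.1.2 ⟨a, ha⟩ + (b'.1.1 ⟨a, ha⟩ : ℕ) - 1, by omega, by omega, ?_⟩
    have := polySlice_chainPyramid b b' ⟨a, ha⟩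
    simp only at this
    rw [this]
    ext ⟨x, y⟩
    simp only [Finset.mem_product, Finset.mem_Ico, Finset.mem_Icc]
    omega
  · intro a x y
    rw [mem_chainPyramid, mem_chainPyramid]
    rintro ⟨ha, h1⟩
    have h2 := b.2.2 ⟨a, by omega⟩ ha
    have h3 := b'.2.2 ⟨a, by omega⟩ ha
    simp only at h2 h3
    exact ⟨by omega, by omega, by omega⟩
  · intro x y
    rw [mem_chainPyramid]
    rintro ⟨ha, h1⟩
    omega
  · rw [mem_chainPyramid]
    refine ⟨hh, ?_⟩
    have := (b.1.1 ⟨0, hh⟩).pos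
    have := (b'.1.1 ⟨0, hh⟩).pos
    have h1 := b.2.1 ⟨0, hh⟩ rfl
    have h2 := b'.2.1 ⟨0, hh⟩ rfl
    omega

theorem chainPyramid_injective {h : ℕ} {b b' d d' : IntervalChain h}
    (hP : chainPyramid b b' = chainPyramid d d') : b = d ∧ b' = d' := by
  have key : ∀ i, (b.1.2 i = d.1.2 i ∧ b.1.1 i = d.1.1 i) ∧
      (b'.1.2 i = d'.1.2 i ∧ b'.1.1 i = d'.1.1 i) := by
    intro i
    have hslice := polySlice_chainPyramid d d' i
    rw [← hP, polySlice_chainPyramid] at hslice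
    have hmem := fun x y : ℤ => Finset.ext_iff.mp hslice (x, y)
    simp only [Finset.mem_product, Finset.mem_Ico] at hmem
    have p1 := (b.1.1 i).pos
    have p2 := (b'.1.1 i).pos
    have p3 := (d'.1.1 i).pos
    have p4 := (d.1.1 i).pos
    -- The two opposite corners of each rectangle lie in the other one.
    have c1 := hmem (b.1.2 i) (b'.1.2 i)
    have c2 := hmem (b.1.2 i + (b.1.1 i : ℕ) - 1) (b'.1.2 i + (b'.1.1 i : ℕ) - 1)
    have c3 := hmem (d.1.2 i) (d'.1.2 i)
    have c4 := hmem (d.1.2 i + (d.1.1 i : ℕ) - 1) (d'.1.2 i + (d'.1.1 i : ℕ) - 1)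
    have q1 := c1.mp (by omega)
    have q2 := c2.mp (by omega)
    have q3 := c3.mpr (by omega)
    have q4 := c4.mpr (by omega)
    rw [← PNat.coe_inj, ← PNat.coe_inj]
    omega
  exact ⟨Subtype.ext (Prod.ext (funext fun i => (key i).1.2) (funext fun i => (key i).1.1)),
    Subtype.ext (Prod.ext (funext fun i => (key i).2.2) (funext fun i => (key i).2.1))⟩

theorem exists_chainPyramid {h : ℕ} {P : Finset (ℕ × ℤ × ℤ)} (hP : IsPyramid h P) :
    ∃ b b' : IntervalChain h, chainPyramid b b' = P := by
  obtain ⟨hne, hplat, hdown, hnn, h0⟩ := hP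
  have hex : ∀ i : Fin h, ∃ l r l' r' : ℤ, (l ≤ r ∧ l' ≤ r') ∧
      ∀ x y, ((i : ℕ), x, y) ∈ P ↔ (l ≤ x ∧ x ≤ r) ∧ (l' ≤ y ∧ y ≤ r') := by
    intro i
    obtain ⟨l, r, l', r', h1, h2, h3⟩ := hplat i i.2
    refine ⟨l, r, l', r', ⟨h1, h2⟩, fun x y => ?_⟩
    rw [← mem_polySlice, h3]
    simp
  choose l r l' r' hlr hmem using hex
  have hzero : ∀ i : Fin h, (i : ℕ) = 0 → l i = 0 ∧ l' i = 0 := by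
    intro i hi
    have h1 := (hmem i 0 0).mp (by rw [hi]; exact h0)
    have h2 := (hmem i (l i) (l' i)).mpr (by have := hlr i; omega)
    rw [hi] at h2
    have h3 := hnn _ _ h2
    omega
  have hstep : ∀ (i : Fin h) (hi : (i : ℕ) + 1 < h),
      (l i ≤ l ⟨i + 1, hi⟩ ∧ r ⟨i + 1, hi⟩ ≤ r i) ∧
      (l' i ≤ l' ⟨i + 1, hi⟩ ∧ r' ⟨i + 1, hi⟩ ≤ r' i) := by
    intro i hi
    have h0 := hlr ⟨i + 1, hi⟩
    have h1 := (hmem i _ _).mp <| hdown _ _ _ <|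
      (hmem ⟨i + 1, hi⟩ (l ⟨i + 1, hi⟩) (l' ⟨i + 1, hi⟩)).mpr (by omega)
    have h2 := (hmem i _ _).mp <| hdown _ _ _ <|
      (hmem ⟨i + 1, hi⟩ (r ⟨i + 1, hi⟩) (r' ⟨i + 1, hi⟩)).mpr (by omega)
    omega
  have hpos : ∀ (k : ℕ) (hk : k < h), 0 ≤ l ⟨k, hk⟩ ∧ 0 ≤ l' ⟨k, hk⟩ := by
    intro k
    induction k with
    | zero => intro hk; have := hzero ⟨0, hk⟩ rfl; omega
    | succ k ih =>
      intro hk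
      have h1 := ih (by omega)
      have h2 := hstep ⟨k, by omega⟩ hk
      simp only at h2
      omega
  let n : Fin h → ℕ+ := fun i => ⟨(r i - l i + 1).toNat, by have := hlr i; omega⟩
  let n' : Fin h → ℕ+ := fun i => ⟨(r' i - l' i + 1).toNat, by have := hlr i; omega⟩
  have hn : ∀ i, ((n i : ℕ) : ℤ) = r i - l i + 1 := fun i => by
    have := hlr i
    simp only [n, PNat.mk_coe]; omega
  have hn' : ∀ i, ((n' i : ℕ) : ℤ) = r' i - l' i + 1 := fun i => by
    have := hlr i
    simp only [n', PNat.mk_coe]; omega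
  refine ⟨⟨(n, fun i => (l i).toNat), ?_, ?_⟩, ⟨(n', fun i => (l' i).toNat), ?_, ?_⟩, ?_⟩
  · intro i hi; have := hzero i hi; simp only; omega
  · intro i hi
    have h1 := hstep i hi
    have h2 := hpos i i.2
    have h3 := hpos _ hi
    have h4 := hn i
    have h5 := hn ⟨i + 1, hi⟩
    simp only [Fin.eta] at h2 ⊢
    omega
  · intro i hi; have := hzero i hi; simp only; omega
  · intro i hi
    have h1 := hstep i hi
    have h2 := hpos i i.2
    have h3 := hpos _ hi
    have h4 := hn' i
    have h5 := hn' ⟨i + 1, hi⟩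
    simp only [Fin.eta] at h2 ⊢
    omega
  · ext ⟨a, x, y⟩
    rw [mem_chainPyramid]
    simp only
    constructor
    · rintro ⟨ha, h1⟩
      have h2 := hpos a ha
      have h4 := hn ⟨a, ha⟩
      have h5 := hn' ⟨a, ha⟩
      exact (hmem ⟨a, ha⟩ x y).mpr (by omega)
    · intro hxy
      have ha : a < h := (hne a).mp ⟨_, mem_polySlice.mpr hxy⟩
      have h1 := (hmem ⟨a, ha⟩ x y).mp hxy
      have h2 := hpos a ha
      have h4 := hn ⟨a, ha⟩
      have h5 := hn' ⟨a, ha⟩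
      exact ⟨ha, by omega, by omega⟩

/-- Entrywise product of decreasing tuples: the multivolume of the pyramid of two chains. -/
def DecTuple.mul {h : ℕ} (n k : DecTuple h) : DecTuple h :=
  ⟨fun i => n.1 i * k.1 i, fun _ _ hij => mul_le_mul' (n.2 hij) (k.2 hij)⟩

theorem card_pyramid_eq {h : ℕ} (hh : 1 ≤ h) (m : DecTuple h) :
    Nat.card {P : Finset (ℕ × ℤ × ℤ) //
        IsPyramid h P ∧ ∀ i : Fin h, (polySlice P (i : ℕ)).card = (m.1 i : ℕ)} =
      Nat.card {p : IntervalChain h × IntervalChain h // p.1.len.mul p.2.len = m} := by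
  have hiff : ∀ p : IntervalChain h × IntervalChain h, p.1.len.mul p.2.len = m ↔
      ∀ i : Fin h, (polySlice (chainPyramid p.1 p.2) (i : ℕ)).card = (m.1 i : ℕ) := by
    intro p
    simp only [card_polySlice_chainPyramid, Subtype.ext_iff, funext_iff, DecTuple.mul,
      IntervalChain.len, ← PNat.coe_inj, PNat.mul_coe]
  symm
  refine Nat.card_congr (Equiv.ofBijective
    (fun p => ⟨chainPyramid p.1.1 p.1.2, isPyramid_chainPyramid hh _ _, (hiff p.1).mp p.2⟩) ⟨?_, ?_⟩)
  · intro p q hpq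
    obtain ⟨h1, h2⟩ := chainPyramid_injective (congrArg Subtype.val hpq)
    exact Subtype.ext (Prod.ext h1 h2)
  · rintro ⟨P, hP, hm⟩
    obtain ⟨b, b', rfl⟩ := exists_chainPyramid hP
    exact ⟨⟨(b, b'), (hiff (b, b')).mpr hm⟩, rfl⟩

/-! ### Series -/

/-- Summation along the fibres of `g`, in `[0, ∞]`. -/
theorem tsum_card_fiber {X A : Type*} (g : X → A) (w : A → ℝ)
    (hfin : ∀ a, Finite {x // g x = a}) :
    ∑' a, ENNReal.ofReal (Nat.card {x // g x = a} * w a) = ∑' x, ENNReal.ofReal (w (g x)) := by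
  rw [← (Equiv.sigmaFiberEquiv g).tsum_eq, ENNReal.tsum_sigma']
  refine tsum_congr fun a => ?_
  have : ∀ x : {x // g x = a}, ENNReal.ofReal (w (g (Equiv.sigmaFiberEquiv g ⟨a, x⟩))) =
      ENNReal.ofReal (w a) := fun x => by
    simp [x.2]
  rw [tsum_congr this, ENNReal.tsum_const, ENNReal.ofReal_mul (by positivity),
    ENNReal.ofReal_natCast]
  have := hfin a
  rw [ENat.card_eq_coe_natCard]
  simp

/-- If a positive function of `g x` has finite sum over `x`, the fibres of `g` are finite. -/
theorem finite_fiber {X A : Type*} (g : X → A) (w : A → ℝ) (hw : ∀ a, 0 < w a)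
    (hsum : ∑' x, ENNReal.ofReal (w (g x)) ≠ ∞) (a : A) : Finite {x // g x = a} := by
  by_contra hinf
  rw [not_finite_iff_infinite] at hinf
  apply hsum
  rw [eq_top_iff]
  calc ∞ = ∑' _ : {x // g x = a}, ENNReal.ofReal (w a) :=
        (ENNReal.tsum_const_eq_top_of_ne_zero (by simpa using hw a)).symm
    _ = ∑' x : {x // g x = a}, ENNReal.ofReal (w (g x)) := by
        refine tsum_congr fun x => ?_
        rw [x.2]
    _ ≤ _ := ENNReal.tsum_comp_le_tsum_of_injective Subtype.val_injective
        fun x => ENNReal.ofReal (w (g x))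

theorem summable_pi_prod {h : ℕ} {α : Type*} (f : Fin h → α → ℝ) (hf0 : ∀ i a, 0 ≤ f i a)
    (hf : ∀ i, Summable (f i)) : Summable fun n : Fin h → α => ∏ i, f i (n i) := by
  classical
  refine summable_of_sum_le (c := ∏ i, ∑' a, f i a)
    (fun n => Finset.prod_nonneg fun i _ => hf0 i _) fun u => ?_
  calc ∑ n ∈ u, ∏ i, f i (n i)
      ≤ ∑ n ∈ Fintype.piFinset fun i => u.image fun n => n i, ∏ i, f i (n i) := by
        refine Finset.sum_le_sum_of_subset_of_nonneg (fun n hn => ?_)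
          fun n _ _ => Finset.prod_nonneg fun i _ => hf0 i _
        exact Fintype.mem_piFinset.mpr fun i => Finset.mem_image_of_mem _ hn
    _ = ∏ i, ∑ a ∈ u.image fun n => n i, f i a := (Finset.prod_univ_sum _ _).symm
    _ ≤ _ := Finset.prod_le_prod (fun i _ => Finset.sum_nonneg fun a _ => hf0 i a)
        fun i _ => (hf i).sum_le_tsum _ fun a _ => hf0 i a

/-- The factors of the weight satisfy `n i - n (i+1) + 1 ≤ n i`, so the series is dominated by the
product of the series `∑ k ^ (1 - s i)`. -/
theorem summable_weight (h : ℕ) (s : Fin h → ℝ) (hs : ∀ i, 3 < s i) :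
    Summable fun n : DecTuple h =>
      (pyrWeight h n.1 : ℝ) / ∏ i : Fin h, ((n.1 i : ℕ) : ℝ) ^ (s i) := by
  have hsum : Summable fun n : Fin h → ℕ+ => ∏ i, ((n i : ℕ) : ℝ) ^ (1 - s i) := by
    refine summable_pi_prod (fun i (k : ℕ+) => ((k : ℕ) : ℝ) ^ (1 - s i))
      (fun i k => by positivity) fun i => ?_
    exact (Real.summable_nat_rpow.mpr (by linarith [hs i])).comp_injective PNat.coe_injective
  refine Summable.of_nonneg_of_le (fun n => by positivity) (fun n => ?_)
    (hsum.comp_injective Subtype.val_injective)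
  simp only [pyrWeight, Nat.cast_prod, Function.comp_apply]
  rw [← Finset.prod_div_distrib]
  refine Finset.prod_le_prod (fun i _ => by positivity) fun i _ => ?_
  have hp : (0 : ℝ) < ((n.1 i : ℕ) : ℝ) := by exact_mod_cast (n.1 i).pos
  rw [Real.rpow_sub hp, Real.rpow_one]
  gcongr
  split_ifs with hi
  · have := (n.1 ⟨(i : ℕ) + 1, hi⟩).pos
    have := (n.1 i).pos
    omega
  · exact (n.1 i).pos

theorem dirichlet_genfun_pyramids (h : ℕ) (hh : 1 ≤ h) (s : Fin h → ℝ)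
    (hs : ∀ i, 3 < s i) :
    (Summable fun m : {m : Fin h → ℕ+ // Antitone m} =>
      (Nat.card {P : Finset (ℕ × ℤ × ℤ) //
          IsPyramid h P ∧ ∀ i : Fin h, (polySlice P (i : ℕ)).card = (m.1 i : ℕ)} : ℝ) /
        ∏ i : Fin h, ((m.1 i : ℕ) : ℝ) ^ (s i)) ∧
    (Summable fun n : {n : Fin h → ℕ+ // Antitone n} =>
      (pyrWeight h n.1 : ℝ) / ∏ i : Fin h, ((n.1 i : ℕ) : ℝ) ^ (s i)) ∧
    (∑' m : {m : Fin h → ℕ+ // Antitone m},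
        (Nat.card {P : Finset (ℕ × ℤ × ℤ) //
            IsPyramid h P ∧ ∀ i : Fin h, (polySlice P (i : ℕ)).card = (m.1 i : ℕ)} : ℝ) /
          ∏ i : Fin h, ((m.1 i : ℕ) : ℝ) ^ (s i)) =
      (∑' n : {n : Fin h → ℕ+ // Antitone n},
        (pyrWeight h n.1 : ℝ) / ∏ i : Fin h, ((n.1 i : ℕ) : ℝ) ^ (s i)) ^ 2 := by
  classical
  let w : DecTuple h → ℝ := fun n => 1 / ∏ i : Fin h, ((n.1 i : ℕ) : ℝ) ^ (s i)
  have hw : ∀ n, 0 < w n := fun n => by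
    have : ∀ i, (0 : ℝ) < ((n.1 i : ℕ) : ℝ) := fun i => by exact_mod_cast (n.1 i).pos
    exact one_div_pos.mpr (Finset.prod_pos fun i _ => Real.rpow_pos_of_pos (this i) _)
  have hwmul : ∀ n k : DecTuple h, w (n.mul k) = w n * w k := fun n k => by
    simp only [w, DecTuple.mul, PNat.mul_coe, Nat.cast_mul]
    rw [one_div_mul_one_div, ← Finset.prod_mul_distrib]
    congr 1
    exact Finset.prod_congr rfl fun i _ => Real.mul_rpow (by positivity) (by positivity)
  have hZ := summable_weight h s hs
  have hZ0 : ∀ n : DecTuple h,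
      0 ≤ (pyrWeight h n.1 : ℝ) / ∏ i : Fin h, ((n.1 i : ℕ) : ℝ) ^ (s i) := fun n => by positivity
  set Z := ∑' n : DecTuple h,
    (pyrWeight h n.1 : ℝ) / ∏ i : Fin h, ((n.1 i : ℕ) : ℝ) ^ (s i) with hZdef
  have hS : ∑' b : IntervalChain h, ENNReal.ofReal (w b.len) = ENNReal.ofReal Z := by
    rw [← tsum_card_fiber _ w fun n => (card_len_fiber n).2, hZdef,
      ENNReal.ofReal_tsum_of_nonneg hZ0 hZ]
    refine tsum_congr fun n => ?_
    rw [(card_len_fiber n).1, mul_one_div]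
  have hSS : ∑' p : IntervalChain h × IntervalChain h,
      ENNReal.ofReal (w (p.1.len.mul p.2.len)) = ENNReal.ofReal (Z ^ 2) := by
    rw [ENNReal.tsum_prod', pow_two, ENNReal.ofReal_mul (tsum_nonneg hZ0), ← hS,
      ← ENNReal.tsum_mul_right]
    refine tsum_congr fun b => ?_
    rw [← ENNReal.tsum_mul_left]
    refine tsum_congr fun b' => ?_
    rw [hwmul, ENNReal.ofReal_mul (hw _).le]
  have hfin := finite_fiber (fun p : IntervalChain h × IntervalChain h => p.1.len.mul p.2.len) w hw
    (by rw [hSS]; exact ENNReal.ofReal_ne_top)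
  have hL := tsum_card_fiber _ w hfin
  rw [hSS] at hL
  have hterm : ∀ m : DecTuple h, (Nat.card {P : Finset (ℕ × ℤ × ℤ) //
      IsPyramid h P ∧ ∀ i : Fin h, (polySlice P (i : ℕ)).card = (m.1 i : ℕ)} : ℝ) /
        ∏ i : Fin h, ((m.1 i : ℕ) : ℝ) ^ (s i) =
      Nat.card {p : IntervalChain h × IntervalChain h // p.1.len.mul p.2.len = m} * w m :=
    fun m => by rw [card_pyramid_eq hh, mul_one_div]
  have hnn : ∀ m : DecTuple h,
      0 ≤ (Nat.card {p : IntervalChain h × IntervalChain h // p.1.len.mul p.2.len = m} : ℝ) * w m :=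
    fun m => mul_nonneg (Nat.cast_nonneg _) (hw m).le
  have hsumL : Summable fun m : DecTuple h =>
      (Nat.card {p : IntervalChain h × IntervalChain h // p.1.len.mul p.2.len = m} : ℝ) * w m := by
    have := ENNReal.summable_toReal (hL.trans_ne ENNReal.ofReal_ne_top)
    simpa only [ENNReal.toReal_ofReal (hnn _)] using this
  refine ⟨by simpa only [hterm] using hsumL, hZ, ?_⟩
  rw [tsum_congr hterm]
  rw [← ENNReal.ofReal_tsum_of_nonneg hnn hsumL] at hL
  exact (ENNReal.ofReal_eq_ofReal_iff (tsum_nonneg hnn) (sq_nonneg Z)).mp hL
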